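/- arXiv:1403.1468 — 7 statements merged into one kernel-verified Lean document; each statement's English description precedes it below -/
import Mathlib

section
/- Let G be a finite simple graph with n vertices, ε edges, and independence number α(G). Then S*(G) = n + ε − α(G), where S*(G) is the minimum total storage over all edge-decompositions of G into stars. -/
open Classical

noncomputable section

variable {V : Type*}

/-- An edge-decomposition of `G` into stars: a finite collection of stars, each given by
a designated centre together with a nonempty set of edges of `G` all incident with the
centre, such that the edge sets are pairwise disjoint and cover the edge set of `G`. -/
structure StarDecomposition (G : SimpleGraph V) where
  stars : Finset (V × Finset (Sym2 V))
  star_nonempty : ∀ p ∈ stars, p.2.Nonempty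
  centre_mem : ∀ p ∈ stars, ∀ e ∈ p.2, p.1 ∈ e
  edges_sub : ∀ p ∈ stars, ∀ e ∈ p.2, e ∈ G.edgeSet
  disj : ∀ p ∈ stars, ∀ q ∈ stars, p ≠ q → Disjoint p.2 q.2
  covers : ∀ e ∈ G.edgeSet, ∃ p ∈ stars, e ∈ p.2

namespace StarDecomposition

variable {G : SimpleGraph V}

/-- The storage of a vertex `u`: the number of stars of the decomposition that contain
`u` as a vertex (as centre or leaf). -/
def storage (D : StarDecomposition G) (u : V) : ℕ :=
  (D.stars.filter fun p => ∃ e ∈ p.2, u ∈ e).card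

/-- The number of stars of the decomposition in which `u` is a leaf
(a vertex other than the centre). -/
def leafCount (D : StarDecomposition G) (u : V) : ℕ :=
  (D.stars.filter fun p => u ≠ p.1 ∧ ∃ e ∈ p.2, u ∈ e).card

/-- The total storage of a decomposition: the sum of the storages of all vertices. -/
def totalStorage [Fintype V] (D : StarDecomposition G) : ℕ :=
  ∑ u, D.storage u

end StarDecomposition

/-- `S*(G)`: the minimum total storage over all edge-decompositions of `G` into stars. -/
def SStar [Fintype V] (G : SimpleGraph V) : ℕ :=
  sInf {S | ∃ D : StarDecomposition G, D.totalStorage = S}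

/-- `S_max*(G)`: the minimum, over all edge-decompositions of `G` into stars, of the
maximum storage of a vertex. -/
def SmaxStar (G : SimpleGraph V) : ℕ :=
  sInf {k | ∃ D : StarDecomposition G, ∀ v, D.storage v ≤ k}

/-- The minimum number of stars over all edge-decompositions of `G` into stars. -/
def minStars (G : SimpleGraph V) : ℕ :=
  sInf {k | ∃ D : StarDecomposition G, D.stars.card = k}

/-- An orientation of `G`: each edge is assigned a head (one of its two endpoints);
the other endpoint is its tail. -/
structure EdgeOrientation (G : SimpleGraph V) where
  head : Sym2 V → V
  head_mem : ∀ e ∈ G.edgeSet, head e ∈ e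

namespace EdgeOrientation

variable {G : SimpleGraph V}

/-- The indegree of `v`: the number of edges whose head is `v`. -/
def indeg (o : EdgeOrientation G) (v : V) : ℕ :=
  {e | e ∈ G.edgeSet ∧ o.head e = v}.ncard

/-- The outdegree of `v`: the number of edges incident with `v` whose head is not `v`. -/
def outdeg (o : EdgeOrientation G) (v : V) : ℕ :=
  {e | e ∈ G.edgeSet ∧ v ∈ e ∧ o.head e ≠ v}.ncard

end EdgeOrientation

/-- `MMI(G)`: the minimum over all orientations of `G` of the maximum indegree. -/
def MMI (G : SimpleGraph V) : ℕ :=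
  sInf {k | ∃ o : EdgeOrientation G, ∀ v, o.indeg v ≤ k}

/-- `MMO(G)`: the minimum over all orientations of `G` of the maximum outdegree. -/
def MMO (G : SimpleGraph V) : ℕ :=
  sInf {k | ∃ o : EdgeOrientation G, ∀ v, o.outdeg v ≤ k}

/-- The independence number `α(G)`: the maximum size of a set of vertices no two of
which are adjacent. -/
def indepNum (G : SimpleGraph V) : ℕ :=
  sSup {k | ∃ s : Finset V, (∀ u ∈ s, ∀ v ∈ s, ¬ G.Adj u v) ∧ s.card = k}

end

theorem star_card_aux {V : Type*} [Fintype V] (G : SimpleGraph V) (c : V) (E : Finset (Sym2 V))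
    (hne : E.Nonempty) (hc : ∀ e ∈ E, c ∈ e) (hE : ∀ e ∈ E, e ∈ G.edgeSet) :
    (Finset.univ.filter fun u => ∃ e ∈ E, u ∈ e).card = E.card + 1 := by
  have h1 : (Finset.univ.filter fun u => s(c, u) ∈ E).card = E.card := by
    refine Finset.card_nbij (fun u => s(c, u)) ?_ ?_ ?_
    · intro u hu
      simpa using hu
    · intro u _ v _ h
      exact Sym2.congr_right.1 h
    · intro e he
      obtain ⟨b, rfl⟩ := hc e he
      exact ⟨b, by simpa using he, rfl⟩
  have h2 : (Finset.univ.filter fun u => ∃ e ∈ E, u ∈ e)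
      = insert c (Finset.univ.filter fun u => s(c, u) ∈ E) := by
    ext u
    simp only [Finset.mem_filter, Finset.mem_univ, true_and, Finset.mem_insert]
    constructor
    · rintro ⟨e, he, hu⟩
      obtain ⟨b, rfl⟩ := hc e he
      rcases Sym2.mem_iff.1 hu with h | h
      · exact Or.inl h
      · subst h; exact Or.inr he
    · rintro (h | h)
      · obtain ⟨e, he⟩ := hne
        exact ⟨e, he, h ▸ hc e he⟩
      · exact ⟨_, h, Sym2.mem_mk_right _ _⟩
  rw [h2, Finset.card_insert_of_notMem, h1]
  intro h
  have := hE _ (Finset.mem_filter.1 h).2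
  simp at this

theorem totalStorage_aux {V : Type*} [Fintype V] {G : SimpleGraph V} (D : StarDecomposition G) :
    D.totalStorage = G.edgeSet.ncard + D.stars.card := by
  have h1 : D.totalStorage = ∑ p ∈ D.stars,
      (Finset.univ.filter fun u => ∃ e ∈ p.2, u ∈ e).card := by
    unfold StarDecomposition.totalStorage StarDecomposition.storage
    simp only [Finset.card_filter]
    exact Finset.sum_comm
  have h2 : G.edgeSet = ↑(D.stars.biUnion Prod.snd) := by
    ext e
    simp only [Finset.mem_coe, Finset.mem_biUnion]
    exact ⟨D.covers e, fun ⟨p, hp, he⟩ => D.edges_sub p hp e he⟩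
  have h3 : G.edgeSet.ncard = ∑ p ∈ D.stars, p.2.card := by
    rw [h2, Set.ncard_coe_finset, Finset.card_biUnion]
    exact fun p hp q hq h => D.disj p hp q hq h
  rw [h1, h3, Finset.sum_congr rfl fun p hp => star_card_aux G p.1 p.2 (D.star_nonempty p hp)
    (D.centre_mem p hp) (D.edges_sub p hp), Finset.sum_add_distrib]
  simp

theorem indepNum_bdd_aux {V : Type*} [Fintype V] (G : SimpleGraph V) :
    BddAbove {k | ∃ s : Finset V, (∀ u ∈ s, ∀ v ∈ s, ¬ G.Adj u v) ∧ s.card = k} := by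
  refine ⟨Fintype.card V, ?_⟩
  rintro k ⟨s, -, rfl⟩
  exact s.card_le_univ

theorem lower_aux {V : Type*} [Fintype V] {G : SimpleGraph V} (D : StarDecomposition G) :
    Fintype.card V ≤ D.stars.card + indepNum G := by
  have h : ((D.stars.image Prod.fst)ᶜ).card ≤ indepNum G := by
    refine le_csSup (indepNum_bdd_aux G) ⟨_, ?_, rfl⟩
    intro u hu v hv huv
    obtain ⟨p, hp, he⟩ := D.covers s(u, v) huv
    have hm := Finset.mem_image_of_mem Prod.fst hp
    rcases Sym2.mem_iff.1 (D.centre_mem p hp _ he) with h | h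
    · exact Finset.mem_compl.1 hu (h ▸ hm)
    · exact Finset.mem_compl.1 hv (h ▸ hm)
  have h2 : (D.stars.image Prod.fst).card ≤ D.stars.card := Finset.card_image_le
  have h3 := Finset.card_add_card_compl (D.stars.image Prod.fst)
  omega

theorem upper_aux {V : Type*} [Fintype V] (G : SimpleGraph V) (s : Finset V)
    (hs : ∀ u ∈ s, ∀ v ∈ s, ¬ G.Adj u v) :
    ∃ D : StarDecomposition G, D.stars.card + s.card ≤ Fintype.card V := by
  have hex : ∀ e : Sym2 V, ∃ c, e ∈ G.edgeSet → c ∈ e ∧ c ∉ s := by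
    intro e
    induction e with | _ u v
    by_cases hu : u ∈ s
    · exact ⟨v, fun h => ⟨by simp, fun hv => hs u hu v hv h⟩⟩
    · exact ⟨u, fun _ => ⟨by simp, hu⟩⟩
  choose f hf' using hex
  have hf := fun e he => (hf' e he).1
  have hfs := fun e he => (hf' e he).2
  let F : V → Finset (Sym2 V) := fun c => Finset.univ.filter fun e => e ∈ G.edgeSet ∧ f e = c
  have hF : ∀ c e, e ∈ F c ↔ e ∈ G.edgeSet ∧ f e = c := fun c e => by simp [F]
  refine ⟨⟨(sᶜ.filter fun c => (F c).Nonempty).image fun c => (c, F c), ?_, ?_, ?_, ?_, ?_⟩, ?_⟩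
  · simp only [Finset.mem_image, Finset.mem_filter]
    rintro p ⟨c, ⟨-, h⟩, rfl⟩
    exact h
  · simp only [Finset.mem_image, Finset.mem_filter]
    rintro p ⟨c, -, rfl⟩ e he
    obtain ⟨h1, h2⟩ := (hF c e).1 he
    have := hf e h1
    rwa [h2] at this
  · simp only [Finset.mem_image, Finset.mem_filter]
    rintro p ⟨c, -, rfl⟩ e he
    exact ((hF c e).1 he).1
  · simp only [Finset.mem_image, Finset.mem_filter]
    rintro p ⟨c, -, rfl⟩ q ⟨d, -, rfl⟩ hne
    rw [Finset.disjoint_left]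
    intro e he he'
    have h : c = d := ((hF c e).1 he).2.symm.trans ((hF d e).1 he').2
    exact hne (by rw [h])
  · intro e he
    have := (hF (f e) e).2 ⟨he, rfl⟩
    exact ⟨(f e, F (f e)), Finset.mem_image_of_mem (fun c => (c, F c)) (Finset.mem_filter.2
      ⟨Finset.mem_compl.2 (hfs e he), ⟨e, this⟩⟩), this⟩
  · have h1 := Finset.card_add_card_compl s
    have h2 : ((sᶜ.filter fun c => (F c).Nonempty).image fun c => (c, F c)).card ≤ sᶜ.card :=
      Finset.card_image_le.trans (Finset.card_filter_le _ _)
    dsimp only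
    omega

/-- `S*(G) = n + ε - α(G)`: the minimum total storage over all
edge-decompositions of `G` into stars. -/
theorem SStar_eq {V : Type*} [Fintype V] (G : SimpleGraph V) :
    SStar G = Fintype.card V + G.edgeSet.ncard - indepNum G := by
  obtain ⟨s, hs, hcard⟩ := Nat.sSup_mem (s := {k | ∃ s : Finset V,
    (∀ u ∈ s, ∀ v ∈ s, ¬ G.Adj u v) ∧ s.card = k}) ⟨0, ∅, by simp, rfl⟩ (indepNum_bdd_aux G)
  change s.card = indepNum G at hcard
  obtain ⟨D, hD⟩ := upper_aux G s hs
  have hup : SStar G ≤ D.totalStorage := Nat.sInf_le ⟨D, rfl⟩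
  obtain ⟨D', hD'⟩ := Nat.sInf_mem (s := {S | ∃ D : StarDecomposition G, D.totalStorage = S})
    ⟨_, D, rfl⟩
  change _ = SStar G at hD'
  have := totalStorage_aux D
  have := totalStorage_aux D'
  have := lower_aux D'
  omega
end

section
/- For the complete graph K_n on n ≥ 2 vertices, S*(K_n) = n(n+1)/2 − 1, where S*(G) is the minimum total storage over all edge-decompositions of G into stars. -/
open Classical

theorem star_vertex_card {V : Type*} [Fintype V] (c : V) (S : Finset (Sym2 V))
    (hne : S.Nonempty) (hc : ∀ e ∈ S, c ∈ e) (hd : ∀ e ∈ S, ¬ e.IsDiag) :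
    (Finset.univ.filter fun u => ∃ e ∈ S, u ∈ e).card = S.card + 1 := by
  set L : Finset V := Finset.univ.filter fun u => s(c, u) ∈ S with hL
  have hcL : c ∉ L := by
    intro h
    have h1 : s(c, c) ∈ S := by simpa [hL] using h
    exact hd _ h1 (by simp)
  have h1 : S = L.image (fun u => s(c, u)) := by
    ext e
    simp only [Finset.mem_image, hL, Finset.mem_filter, Finset.mem_univ, true_and]
    constructor
    · intro he
      obtain ⟨u, rfl⟩ := Sym2.mem_iff_exists.1 (hc e he)
      exact ⟨u, he, rfl⟩
    · rintro ⟨u, hu, rfl⟩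
      exact hu
  have h2 : (Finset.univ.filter fun u => ∃ e ∈ S, u ∈ e) = insert c L := by
    ext u
    simp only [Finset.mem_insert, hL, Finset.mem_filter, Finset.mem_univ, true_and]
    constructor
    · rintro ⟨e, he, hu⟩
      obtain ⟨w, rfl⟩ := Sym2.mem_iff_exists.1 (hc e he)
      rcases Sym2.mem_iff.1 hu with rfl | rfl
      · exact Or.inl rfl
      · exact Or.inr he
    · rintro (rfl | hu)
      · obtain ⟨e, he⟩ := hne
        exact ⟨e, he, hc e he⟩
      · exact ⟨_, hu, by simp⟩
  have h3 : S.card = L.card := by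
    conv_lhs => rw [h1]
    apply Finset.card_image_of_injective
    intro a b hab
    exact Sym2.congr_right.1 hab
  rw [h3, h2, Finset.card_insert_of_notMem hcL]

theorem total_eq {V : Type*} [Fintype V] {G : SimpleGraph V} [Fintype G.edgeSet]
    (D : StarDecomposition G) :
    D.totalStorage = G.edgeFinset.card + D.stars.card := by
  have h1 : D.totalStorage =
      ∑ p ∈ D.stars, (Finset.univ.filter fun u => ∃ e ∈ p.2, u ∈ e).card := by
    simp only [StarDecomposition.totalStorage, StarDecomposition.storage, Finset.card_filter]
    exact Finset.sum_comm
  have h2 : G.edgeFinset = D.stars.biUnion (fun p => p.2) := by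
    ext e
    simp only [SimpleGraph.mem_edgeFinset, Finset.mem_biUnion]
    exact ⟨D.covers e, fun ⟨p, hp, he⟩ => D.edges_sub p hp e he⟩
  rw [h1, h2, Finset.card_biUnion (fun p hp q hq h => D.disj p hp q hq h),
    Finset.card_eq_sum_ones, ← Finset.sum_add_distrib]
  refine Finset.sum_congr rfl fun p hp => ?_
  exact star_vertex_card p.1 p.2 (D.star_nonempty p hp) (D.centre_mem p hp)
    (fun e he => G.not_isDiag_of_mem_edgeSet (D.edges_sub p hp e he))

theorem stars_ge (n : ℕ) (D : StarDecomposition (⊤ : SimpleGraph (Fin n))) :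
    n - 1 ≤ D.stars.card := by
  have h1 : (D.stars.image Prod.fst).card ≤ D.stars.card := Finset.card_image_le
  have h2 : ((D.stars.image Prod.fst)ᶜ).card ≤ 1 := by
    rw [Finset.card_le_one]
    intro a ha b hb
    by_contra hab
    obtain ⟨p, hp, he⟩ := D.covers s(a, b) (by simpa using hab)
    rw [Finset.mem_compl] at ha hb
    rcases Sym2.mem_iff.1 (D.centre_mem p hp _ he) with h | h
    · exact ha (Finset.mem_image.2 ⟨p, hp, h⟩)
    · exact hb (Finset.mem_image.2 ⟨p, hp, h⟩)
  rw [Finset.card_compl, Fintype.card_fin] at h2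
  omega

theorem exists_decomp (n : ℕ) :
    ∃ D : StarDecomposition (⊤ : SimpleGraph (Fin n)), D.stars.card ≤ n - 1 := by
  let f : Fin n → Fin n × Finset (Sym2 (Fin n)) :=
    fun i => (i, (Finset.Ioi i).image fun j => s(i, j))
  let I : Finset (Fin n) := Finset.univ.filter fun i => (Finset.Ioi i).Nonempty
  refine ⟨⟨I.image f, ?_, ?_, ?_, ?_, ?_⟩, ?_⟩
  · intro p hp
    obtain ⟨i, hi, rfl⟩ := Finset.mem_image.1 hp
    exact (Finset.mem_filter.1 hi).2.image _
  · intro p hp e he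
    obtain ⟨i, hi, rfl⟩ := Finset.mem_image.1 hp
    obtain ⟨j, hj, rfl⟩ := Finset.mem_image.1 he
    simp [f]
  · intro p hp e he
    obtain ⟨i, hi, rfl⟩ := Finset.mem_image.1 hp
    obtain ⟨j, hj, rfl⟩ := Finset.mem_image.1 he
    simpa using (Finset.mem_Ioi.1 hj).ne
  · intro p hp q hq hpq
    obtain ⟨i, hi, rfl⟩ := Finset.mem_image.1 hp
    obtain ⟨k, hk, rfl⟩ := Finset.mem_image.1 hq
    rw [Finset.disjoint_left]
    intro e he he'
    obtain ⟨j, hj, rfl⟩ := Finset.mem_image.1 he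
    obtain ⟨l, hl, h⟩ := Finset.mem_image.1 he'
    rw [Finset.mem_Ioi] at hj hl
    rcases Sym2.eq_iff.1 h with ⟨rfl, rfl⟩ | ⟨rfl, rfl⟩
    · exact hpq rfl
    · exact absurd hj (not_lt.2 hl.le)
  · intro e
    induction e using Sym2.ind with
    | _ a b =>
      intro hab
      have hab : a ≠ b := by simpa using hab
      rcases lt_or_gt_of_ne hab with h | h
      · exact ⟨f a, Finset.mem_image_of_mem _ (by simpa [I] using ⟨b, by simpa using h⟩),
          Finset.mem_image.2 ⟨b, by simpa using h, rfl⟩⟩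
      · exact ⟨f b, Finset.mem_image_of_mem _ (by simpa [I] using ⟨a, by simpa using h⟩),
          Finset.mem_image.2 ⟨a, by simpa using h, Sym2.eq_swap⟩⟩
  · refine Finset.card_image_le.trans ?_
    rcases n with _ | m
    · simp [I]
    · have : I ⊆ Finset.univ.erase (Fin.last m) := by
        intro i hi
        obtain ⟨j, hj⟩ := (Finset.mem_filter.1 hi).2
        rw [Finset.mem_Ioi] at hj
        exact Finset.mem_erase.2 ⟨(hj.trans_le (Fin.le_last j)).ne, Finset.mem_univ _⟩
      simpa using Finset.card_le_card this

/-- For the complete graph on `n ≥ 2` vertices,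
`S*(K_n) = n(n+1)/2 - 1`. -/
theorem SStar_completeGraph (n : ℕ) (hn : 2 ≤ n) :
    SStar (⊤ : SimpleGraph (Fin n)) = n * (n + 1) / 2 - 1 := by
  have hE : (⊤ : SimpleGraph (Fin n)).edgeFinset.card = n.choose 2 := by
    have := SimpleGraph.card_edgeFinset_top_eq_card_choose_two (V := Fin n)
    rw [Fintype.card_fin] at this
    rw [← this]
  have hA : n * (n + 1) / 2 - 1 = n.choose 2 + (n - 1) := by
    have h1 : (n + 1).choose 2 = n * (n + 1) / 2 := by
      rw [Nat.choose_two_right, Nat.add_sub_cancel, mul_comm]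
    have h2 : (n + 1).choose 2 = n + n.choose 2 := by
      rw [Nat.choose_succ_succ' n 1, Nat.choose_one_right]
    omega
  rw [hA]
  obtain ⟨D, hD⟩ := exists_decomp n
  unfold SStar
  apply le_antisymm
  · have h : D.totalStorage ∈ {S | ∃ D : StarDecomposition (⊤ : SimpleGraph (Fin n)),
        D.totalStorage = S} := ⟨D, rfl⟩
    refine (Nat.sInf_le h).trans ?_
    rw [total_eq, hE]
    omega
  · refine le_csInf ⟨_, D, rfl⟩ ?_
    rintro _ ⟨D', rfl⟩
    rw [total_eq, hE]
    have := stars_ge n D'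
    omega
end

section
/- Let G be a finite simple graph and let d denote the maximum degree of a vertex of G. Then S_max*(G) ≤ (d+3)/2 if d is odd, and S_max*(G) ≤ (d+2)/2 if d is even, where S_max*(G) is the minimum over all edge-decompositions of G into stars of the maximum storage of a vertex. -/
open Classical

theorem aux_orient {V : Type*} [Fintype V] (G : SimpleGraph V) [DecidableRel G.Adj]
    (k : ℕ) (hk : G.maxDegree ≤ 2 * k) :
    ∃ h t : Sym2 V → V, (∀ e ∈ G.edgeFinset, e = s(h e, t e)) ∧
      ∀ u, (G.edgeFinset.filter fun e => h e = u).card ≤ k := by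
  let T : {e // e ∈ G.edgeFinset} → Finset (V × Fin k) := fun e =>
    (Finset.univ.filter fun v => v ∈ e.1) ×ˢ Finset.univ
  have hall : ∀ s : Finset {e // e ∈ G.edgeFinset}, s.card ≤ (s.biUnion T).card := by
    intro s
    let W : Finset V := s.biUnion fun e => Finset.univ.filter fun v => v ∈ e.1
    have h1 : s.biUnion T = W ×ˢ (Finset.univ : Finset (Fin k)) := by
      ext ⟨v, i⟩
      simp [T, W]
    have h2 : s.card * 2 ≤ W.card * G.maxDegree := by
      refine Finset.card_mul_le_card_mul (fun e v => v ∈ e.1) ?_ ?_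
      · rintro ⟨e, he⟩ hes
        induction e with
        | _ a b =>
        have hab : a ≠ b := by
          have : G.Adj a b := by simpa using he
          exact this.ne
        rw [← Finset.card_pair hab]
        apply Finset.card_le_card
        intro x hx
        simp only [Finset.mem_insert, Finset.mem_singleton] at hx
        simp only [Finset.mem_bipartiteAbove, W, Finset.mem_biUnion, Finset.mem_filter,
          Finset.mem_univ, true_and]
        exact ⟨⟨_, hes, by simpa using hx⟩, by simpa using hx⟩
      · intro v _
        refine le_trans ?_ (G.degree_le_maxDegree v)
        rw [← G.card_incidenceFinset_eq_degree v]
        refine Finset.card_le_card_of_injOn (fun e => e.1) ?_ ?_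
        · rintro ⟨e, he⟩ h
          have h' := (Finset.mem_bipartiteBelow _).1 h
          have he' : e ∈ G.edgeSet := by simpa using he
          have : e ∈ G.incidenceSet v := ⟨he', h'.2⟩
          simpa using this
        · intro a _ b _ hab
          exact Subtype.ext hab
    rw [h1, Finset.card_product, Finset.card_univ, Fintype.card_fin]
    have := Nat.mul_le_mul_left W.card hk
    nlinarith
  obtain ⟨f, hf, hfT⟩ := (Finset.all_card_le_biUnion_card_iff_exists_injective T).1 hall
  have hmem : ∀ e, (f e).1 ∈ e.1 := by
    intro e
    have := hfT e
    simpa [T] using this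
  let h : Sym2 V → V := fun e => if he : e ∈ G.edgeFinset then (f ⟨e, he⟩).1 else e.out.1
  have hh : ∀ e, ∃ w, e ∈ G.edgeFinset → e = s(h e, w) := by
    intro e
    by_cases he : e ∈ G.edgeFinset
    · obtain ⟨w, hw⟩ := hmem ⟨e, he⟩
      exact ⟨w, fun _ => by simp only [h, he, dite_true]; exact hw⟩
    · exact ⟨e.out.1, fun h => absurd h he⟩
  choose t ht using hh
  refine ⟨h, t, ht, fun u => ?_⟩
  have hc : (G.edgeFinset.filter fun e => h e = u).card ≤
      (({u} : Finset V) ×ˢ (Finset.univ : Finset (Fin k))).card := by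
    rw [← Finset.card_attach]
    refine Finset.card_le_card_of_injOn
      (fun e => f ⟨e.1, (Finset.mem_filter.1 e.2).1⟩) ?_ ?_
    · rintro ⟨e, he⟩ _
      obtain ⟨he1, he2⟩ := Finset.mem_filter.1 he
      have : (f ⟨e, he1⟩).1 = u := by
        simp only [h, he1, dite_true] at he2
        exact he2
      rw [Finset.mem_coe, Finset.mem_product]
      exact ⟨Finset.mem_singleton.2 this, Finset.mem_univ _⟩
    · intro a _ b _ hab
      have := congrArg Subtype.val (hf hab)
      exact Subtype.ext this
  simpa using hc

theorem aux_main {V : Type*} [Fintype V] (G : SimpleGraph V) [DecidableRel G.Adj]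
    (k : ℕ) (hk : G.maxDegree ≤ 2 * k) : SmaxStar G ≤ k + 1 := by
  obtain ⟨h, t, he, hc⟩ := aux_orient G k hk
  let S : V → V × Finset (Sym2 V) := fun v => (v, G.edgeFinset.filter fun e => t e = v)
  have key : ∀ p ∈ (Finset.univ.image S).filter (fun p => p.2.Nonempty),
      p = S p.1 ∧ p.2.Nonempty := by
    intro p hp
    obtain ⟨hp1, hp2⟩ := Finset.mem_filter.1 hp
    obtain ⟨v, _, rfl⟩ := Finset.mem_image.1 hp1
    exact ⟨rfl, hp2⟩
  have key2 : ∀ p ∈ (Finset.univ.image S).filter (fun p => p.2.Nonempty),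
      ∀ e ∈ p.2, e ∈ G.edgeFinset ∧ t e = p.1 := by
    intro p hp e hep
    have := (key p hp).1
    rw [this] at hep
    exact Finset.mem_filter.1 hep
  let D : StarDecomposition G :=
    { stars := (Finset.univ.image S).filter fun p => p.2.Nonempty
      star_nonempty := fun p hp => (key p hp).2
      centre_mem := by
        intro p hp e hep
        obtain ⟨h1, h2⟩ := key2 p hp e hep
        rw [← h2]
        have h3 : t e ∈ s(h e, t e) := Sym2.mem_mk_right _ _
        rwa [← he e h1] at h3
      edges_sub := by
        intro p hp e hep
        simpa using (key2 p hp e hep).1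
      disj := by
        intro p hp q hq hpq
        rw [Finset.disjoint_left]
        intro e h1 h2
        apply hpq
        rw [(key p hp).1, (key q hq).1, ← (key2 p hp e h1).2, ← (key2 q hq e h2).2]
      covers := by
        intro e hE
        have h1 : e ∈ (S (t e)).2 := by
          exact Finset.mem_filter.2 ⟨by simpa using hE, rfl⟩
        exact ⟨S (t e), Finset.mem_filter.2
          ⟨Finset.mem_image_of_mem _ (Finset.mem_univ _), ⟨e, h1⟩⟩, h1⟩ }
  apply Nat.sInf_le
  refine ⟨D, fun u => ?_⟩
  have hsub : (D.stars.filter fun p => ∃ e ∈ p.2, u ∈ e) ⊆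
      insert (S u) ((G.edgeFinset.filter fun e => h e = u).image fun e => S (t e)) := by
    intro p hp
    obtain ⟨hp1, e, hep, hu⟩ := Finset.mem_filter.1 hp
    obtain ⟨h1, h2⟩ := key2 p hp1 e hep
    rw [he e h1, Sym2.mem_iff] at hu
    rw [Finset.mem_insert, Finset.mem_image]
    rcases hu with hu | hu
    · right
      exact ⟨e, Finset.mem_filter.2 ⟨h1, hu.symm⟩, by rw [h2]; exact (key p hp1).1.symm⟩
    · left
      rw [hu, h2]
      exact (key p hp1).1
  calc D.storage u ≤ _ := Finset.card_le_card hsub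
    _ ≤ _ := Finset.card_insert_le _ _
    _ ≤ k + 1 := Nat.add_le_add_right (Finset.card_image_le.trans (hc u)) 1

/-- If `d` is the maximum degree of `G`, then
`S_max*(G) ≤ (d+3)/2` if `d` is odd and `S_max*(G) ≤ (d+2)/2` if `d` is even. -/
theorem SmaxStar_le_of_maxDegree {V : Type*} [Fintype V] (G : SimpleGraph V)
    [DecidableRel G.Adj] :
    (Odd G.maxDegree → SmaxStar G ≤ (G.maxDegree + 3) / 2) ∧
      (Even G.maxDegree → SmaxStar G ≤ (G.maxDegree + 2) / 2) := by
  constructor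
  · rintro ⟨m, hm⟩
    have := aux_main G (m + 1) (by omega)
    omega
  · rintro ⟨m, hm⟩
    have := aux_main G m (by omega)
    omega
end

section
/- Let G be a finite simple graph with n vertices (n ≥ 1), ε edges, and independence number α(G). Then S_max*(G) ≥ ⌈(n + ε − α(G))/n⌉, where S_max*(G) is the minimum over all edge-decompositions of G into stars of the maximum storage of a vertex. -/
open Classical

theorem StarDecomposition.exists_any {V : Type*} [Fintype V] (G : SimpleGraph V) :
    Nonempty (StarDecomposition G) := by
  classical
  have hfin : G.edgeSet.Finite := Set.toFinite _
  refine ⟨⟨hfin.toFinset.image (fun e => (e.out.1, {e})), ?_, ?_, ?_, ?_, ?_⟩⟩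
  · intro p hp
    simp only [Finset.mem_image] at hp
    obtain ⟨e, he, rfl⟩ := hp
    simp
  · intro p hp f hf
    simp only [Finset.mem_image] at hp
    obtain ⟨e, he, rfl⟩ := hp
    simp only [Finset.mem_singleton] at hf
    subst hf
    exact Sym2.out_fst_mem f
  · intro p hp f hf
    simp only [Finset.mem_image] at hp
    obtain ⟨e, he, rfl⟩ := hp
    simp only [Finset.mem_singleton] at hf
    subst hf
    simpa using he
  · intro p hp q hq hpq
    simp only [Finset.mem_image] at hp hq
    obtain ⟨e, he, rfl⟩ := hp
    obtain ⟨f, hf, rfl⟩ := hq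
    simp only [Finset.disjoint_singleton]
    rintro rfl
    exact hpq rfl
  · intro e he
    exact ⟨(e.out.1, {e}), Finset.mem_image.2 ⟨e, by simpa using he, rfl⟩, by simp⟩

theorem StarDecomposition.total_lower {V : Type*} [Fintype V] (G : SimpleGraph V)
    (D : StarDecomposition G) :
    D.stars.card + G.edgeSet.ncard ≤ ∑ u, D.storage u := by
  classical
  have h1 : ∑ u, D.storage u
      = ∑ p ∈ D.stars, (Finset.univ.filter fun u : V => ∃ e ∈ p.2, u ∈ e).card := by
    unfold StarDecomposition.storage
    simp only [Finset.card_filter]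
    exact Finset.sum_comm
  have h2 : G.edgeSet.ncard ≤ ∑ p ∈ D.stars, p.2.card := by
    have hs : G.edgeSet ⊆ ((D.stars.biUnion fun p => p.2 : Finset (Sym2 V)) : Set (Sym2 V)) := by
      intro e he
      obtain ⟨p, hp, hep⟩ := D.covers e he
      exact Finset.mem_coe.2 (Finset.mem_biUnion.2 ⟨p, hp, hep⟩)
    have := Set.ncard_le_ncard hs (Finset.finite_toSet _)
    rw [Set.ncard_coe_finset] at this
    exact this.trans Finset.card_biUnion_le
  have h3 : ∑ p ∈ D.stars, (1 + p.2.card)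
      ≤ ∑ p ∈ D.stars, (Finset.univ.filter fun u : V => ∃ e ∈ p.2, u ∈ e).card := by
    refine Finset.sum_le_sum fun p hp => ?_
    set U := Finset.univ.filter fun u : V => ∃ e ∈ p.2, u ∈ e with hU
    have hc : p.1 ∈ U := by
      obtain ⟨e, he⟩ := D.star_nonempty p hp
      simp only [hU, Finset.mem_filter, Finset.mem_univ, true_and]
      exact ⟨e, he, D.centre_mem p hp e he⟩
    have hsub : p.2 ⊆ (U.erase p.1).image (fun u => s(p.1, u)) := by
      intro e he
      obtain ⟨w, rfl⟩ := Sym2.mem_iff_exists.1 (D.centre_mem p hp e he)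
      have hadj : G.Adj p.1 w := D.edges_sub p hp _ he
      refine Finset.mem_image.2 ⟨w, Finset.mem_erase.2 ⟨hadj.ne', ?_⟩, rfl⟩
      simp only [hU, Finset.mem_filter, Finset.mem_univ, true_and]
      exact ⟨_, he, Sym2.mem_mk_right _ _⟩
    have h4 := (Finset.card_le_card hsub).trans Finset.card_image_le
    have h5 := Finset.card_erase_add_one hc
    omega
  rw [Finset.sum_add_distrib] at h3
  simp only [Finset.sum_const, smul_eq_mul, mul_one] at h3
  omega

theorem StarDecomposition.card_le_stars {V : Type*} [Fintype V] (G : SimpleGraph V)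
    (D : StarDecomposition G) :
    Fintype.card V ≤ D.stars.card + indepNum G := by
  classical
  set C := D.stars.image Prod.fst with hC
  have h1 : C.card ≤ D.stars.card := Finset.card_image_le
  have h2 : Cᶜ.card ≤ indepNum G := by
    refine le_csSup ⟨Fintype.card V, ?_⟩ ⟨Cᶜ, ?_, rfl⟩
    · rintro k ⟨s, -, rfl⟩
      exact Finset.card_le_univ s
    · intro u hu v hv huv
      obtain ⟨p, hp, hep⟩ := D.covers s(u, v) huv
      have hpC : p.1 ∈ C := Finset.mem_image_of_mem _ hp
      rcases Sym2.mem_iff.1 (D.centre_mem p hp _ hep) with h | h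
      · exact (Finset.mem_compl.1 hu) (h ▸ hpC)
      · exact (Finset.mem_compl.1 hv) (h ▸ hpC)
  have h3 := Finset.card_add_card_compl C
  omega

/-- For a graph on `n ≥ 1` vertices with `ε` edges,
`S_max*(G) ≥ ⌈(n + ε - α(G))/n⌉` (the ceiling is expressed as `(x + n - 1)/n`). -/
theorem SmaxStar_lower_bound {V : Type*} [Fintype V] [Nonempty V] (G : SimpleGraph V) :
    (Fintype.card V + G.edgeSet.ncard - indepNum G + (Fintype.card V - 1)) / Fintype.card V
      ≤ SmaxStar G := by 
  obtain ⟨D, hD⟩ : SmaxStar G ∈ {k | ∃ D : StarDecomposition G, ∀ v, D.storage v ≤ k} := by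
    apply Nat.sInf_mem
    obtain ⟨D⟩ := StarDecomposition.exists_any G
    exact ⟨∑ u, D.storage u, D, fun v =>
      Finset.single_le_sum (f := fun u => D.storage u) (fun _ _ => Nat.zero_le _)
        (Finset.mem_univ v)⟩
  have h1 := StarDecomposition.total_lower G D
  have h2 := StarDecomposition.card_le_stars G D
  have h3 : ∑ u, D.storage u ≤ Fintype.card V * SmaxStar G := by
    have := Finset.sum_le_card_nsmul Finset.univ (fun u => D.storage u) _ (fun u _ => hD u)
    simpa using this
  have hn : 0 < Fintype.card V := Fintype.card_pos
  refine Nat.le_of_lt_succ ((Nat.div_lt_iff_lt_mul hn).2 ?_)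
  rw [Nat.succ_mul, Nat.mul_comm]
  omega
end

section
/- Let G be a finite simple graph on at least one vertex that is regular of even degree d > 0. Then S_max*(G) = (d+2)/2, where S_max*(G) is the minimum over all edge-decompositions of G into stars of the maximum storage of a vertex. -/
open Classical

lemma aux_inc {V : Type*} [Fintype V] (G : SimpleGraph V)
    [DecidableRel G.Adj] (d : ℕ) (hreg : G.IsRegularOfDegree d) (u : V) :
    (Finset.univ.filter fun e : Sym2 V => e ∈ G.edgeSet ∧ u ∈ e).card = d := by
  rw [← hreg u, ← G.card_incidenceFinset_eq_degree]
  congr 1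
  ext e
  simp [SimpleGraph.mem_incidenceFinset, SimpleGraph.incidenceSet]

lemma aux_two {V : Type*} [Fintype V] (G : SimpleGraph V) (e : Sym2 V) (he : e ∈ G.edgeSet) :
    (Finset.univ.filter fun v : V => v ∈ e).card = 2 := by
  induction e with
  | _ a b =>
    have hab : a ≠ b := by
      have : G.Adj a b := he
      exact this.ne
    rw [← Finset.card_pair hab]
    congr 1
    ext v
    simp

lemma aux_other {V : Type*} {e : Sym2 V} {a b : V} (ha : a ∈ e) (hb : b ∈ e) (h : a ≠ b) :
    e = s(a, b) := (Sym2.mem_and_mem_iff h).1 ⟨ha, hb⟩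

lemma aux_head {V : Type*} [Fintype V] (G : SimpleGraph V)
    [DecidableRel G.Adj] (k : ℕ) (hreg : G.IsRegularOfDegree (k + k)) :
    ∃ f : G.edgeSet → V × Fin k, Function.Injective f ∧ ∀ e : G.edgeSet, (f e).1 ∈ (e : Sym2 V) := by
  have := (Finset.all_card_le_biUnion_card_iff_exists_injective
    (fun e : G.edgeSet => Finset.univ.filter fun p : V × Fin k => p.1 ∈ (e : Sym2 V))).1 ?_
  · simpa using this
  intro S
  have hN : (S.biUnion fun e : G.edgeSet => Finset.univ.filter
      fun p : V × Fin k => p.1 ∈ (e : Sym2 V)) =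
      (Finset.univ.filter fun v : V => ∃ e ∈ S, v ∈ (e : Sym2 V)) ×ˢ Finset.univ := by
    ext p
    simp
  rw [hN, Finset.card_product, Finset.card_univ, Fintype.card_fin]
  have h := Finset.card_mul_le_card_mul (s := S)
    (t := Finset.univ.filter fun v : V => ∃ e ∈ S, v ∈ (e : Sym2 V))
    (fun (e : G.edgeSet) v => v ∈ (e : Sym2 V)) (m := 2) (n := k + k) ?_ ?_
  · nlinarith
  · intro e he
    rw [← aux_two G e e.2]
    apply Finset.card_le_card
    intro v hv
    simp only [Finset.mem_filter, Finset.mem_univ, true_and] at hv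
    simp only [Finset.bipartiteAbove, Finset.mem_filter, Finset.mem_univ, true_and]
    exact ⟨⟨e, he, hv⟩, hv⟩
  · intro v _
    rw [← aux_inc G _ hreg v]
    apply Finset.card_le_card_of_injOn (fun e : G.edgeSet => (e : Sym2 V))
    · intro e he
      simp only [Finset.bipartiteBelow, Finset.coe_filter, Set.mem_ofPred_eq] at he
      simpa using he.2
    · exact Subtype.val_injective.injOn

lemma aux_upper {V : Type*} [Fintype V] (G : SimpleGraph V)
    [DecidableRel G.Adj] (k : ℕ) (hk : 0 < k) (hreg : G.IsRegularOfDegree (k + k)) :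
    ∃ D : StarDecomposition G, ∀ v, D.storage v ≤ k + 1 := by
  obtain ⟨f, hf, hfm⟩ := aux_head G k hreg
  let S : V → V × Finset (Sym2 V) := fun c =>
    (c, Finset.univ.filter fun e => ∃ h : e ∈ G.edgeSet, c ∈ e ∧ (f ⟨e, h⟩).1 ≠ c)
  have hS : ∀ c e, e ∈ (S c).2 ↔ ∃ h : e ∈ G.edgeSet, c ∈ e ∧ (f ⟨e, h⟩).1 ≠ c := by
    intro c e; simp [S]
  let D : StarDecomposition G :=
    { stars := (Finset.univ.image S).filter fun p => p.2.Nonempty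
      star_nonempty := fun p hp => (Finset.mem_filter.1 hp).2
      centre_mem := by
        intro p hp e he
        obtain ⟨c, -, rfl⟩ := Finset.mem_image.1 (Finset.mem_filter.1 hp).1
        obtain ⟨h, h1, h2⟩ := (hS c e).1 he
        exact h1
      edges_sub := by
        intro p hp e he
        obtain ⟨c, -, rfl⟩ := Finset.mem_image.1 (Finset.mem_filter.1 hp).1
        obtain ⟨h, h1, h2⟩ := (hS c e).1 he
        exact h
      disj := by
        intro p hp q hq hpq
        obtain ⟨c, -, rfl⟩ := Finset.mem_image.1 (Finset.mem_filter.1 hp).1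
        obtain ⟨c', -, rfl⟩ := Finset.mem_image.1 (Finset.mem_filter.1 hq).1
        rw [Finset.disjoint_left]
        intro e he he'
        obtain ⟨h, h1, h2⟩ := (hS c e).1 he
        obtain ⟨h', h1', h2'⟩ := (hS c' e).1 he'
        have hcc : c ≠ c' := fun h => hpq (by rw [h])
        have := hfm ⟨e, h⟩
        have he2 := aux_other h1 h1' hcc
        simp only at this
        have h3 : (f ⟨e, h⟩).1 ∈ s(c, c') := he2 ▸ this
        rcases Sym2.mem_iff.1 h3 with h4 | h4
        · exact h2 h4
        · exact h2' h4
      covers := by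
        intro e he
        have h1 := hfm ⟨e, he⟩
        simp only at h1
        obtain ⟨b, hb⟩ := h1
        have hne : (f ⟨e, he⟩).1 ≠ b := by
          have h2 := he
          rw [hb] at h2
          exact G.ne_of_adj h2
        have hm : e ∈ (S b).2 := (hS b e).2 ⟨he, by rw [hb]; simp, hne⟩
        exact ⟨S b, Finset.mem_filter.2 ⟨Finset.mem_image_of_mem _ (Finset.mem_univ _), ⟨e, hm⟩⟩, hm⟩ }
  refine ⟨D, fun u => ?_⟩
  have hT : ((Finset.univ.filter fun c : V => ∃ h : s(c, u) ∈ G.edgeSet,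
      (f ⟨s(c, u), h⟩).1 = u)).card ≤ k := by
    have hex : ∀ c ∈ (Finset.univ.filter fun c : V => ∃ h : s(c, u) ∈ G.edgeSet,
      (f ⟨s(c, u), h⟩).1 = u), ∃ i : Fin k, ∃ h : s(c, u) ∈ G.edgeSet,
      f ⟨s(c, u), h⟩ = (u, i) := by
      intro c hc
      obtain ⟨h, h1⟩ := (Finset.mem_filter.1 hc).2
      exact ⟨(f ⟨s(c, u), h⟩).2, h, Prod.ext h1 rfl⟩
    haveI : Nonempty (Fin k) := ⟨⟨0, hk⟩⟩
    choose! g hg using hex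
    calc _ ≤ (Finset.univ : Finset (Fin k)).card := by
          apply Finset.card_le_card_of_injOn g (fun _ _ => Finset.mem_coe.2 (Finset.mem_univ _))
          intro a ha b hb hab
          obtain ⟨h1, h2⟩ := hg a ha
          obtain ⟨h3, h4⟩ := hg b hb
          have h5 := hf (h2.trans ((congrArg (fun i => (u, i)) hab).trans h4.symm))
          have h6 : s(a, u) = s(b, u) := congrArg Subtype.val h5
          exact Sym2.congr_left.1 h6
      _ = k := by simp
  have hsub : (D.stars.filter fun p => ∃ e ∈ p.2, u ∈ e) ⊆
      insert (S u) ((Finset.univ.filter fun c : V => ∃ h : s(c, u) ∈ G.edgeSet,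
      (f ⟨s(c, u), h⟩).1 = u).image S) := by
    intro p hp
    obtain ⟨hp1, e, he, hue⟩ := Finset.mem_filter.1 hp
    obtain ⟨c, -, rfl⟩ := Finset.mem_image.1 (Finset.mem_filter.1 hp1).1
    obtain ⟨h, h1, h2⟩ := (hS c e).1 he
    by_cases hcu : c = u
    · subst hcu; exact Finset.mem_insert_self _ _
    · apply Finset.mem_insert_of_mem
      apply Finset.mem_image_of_mem
      have he2 := aux_other h1 hue hcu
      subst he2
      refine Finset.mem_filter.2 ⟨Finset.mem_univ _, h, ?_⟩
      exact (Sym2.mem_iff.1 (hfm ⟨s(c, u), h⟩)).resolve_left h2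
  calc D.storage u ≤ _ := Finset.card_le_card hsub
    _ ≤ _ := Finset.card_insert_le _ _
    _ ≤ k + 1 := by
      have := Finset.card_image_le (s := (Finset.univ.filter fun c : V =>
        ∃ h : s(c, u) ∈ G.edgeSet, (f ⟨s(c, u), h⟩).1 = u)) (f := S)
      omega

lemma aux_lower {V : Type*} [Fintype V] [Nonempty V] (G : SimpleGraph V)
    [DecidableRel G.Adj] (k : ℕ) (hk : 0 < k) (hreg : G.IsRegularOfDegree (k + k))
    (D : StarDecomposition G) (hD : ∀ v, D.storage v ≤ k) : False := by
  obtain ⟨σ, hσ⟩ : ∃ σ : Sym2 V → V × Finset (Sym2 V),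
      ∀ e ∈ G.edgeSet, σ e ∈ D.stars ∧ e ∈ (σ e).2 := by
    have := D.covers
    choose! σ h using this
    exact ⟨σ, h⟩
  have hc : ∀ e ∈ G.edgeSet, (σ e).1 ∈ e := fun e he =>
    D.centre_mem _ (hσ e he).1 e (hσ e he).2
  have hC : ∀ u, k + 1 ≤
      (Finset.univ.filter fun e : Sym2 V => e ∈ G.edgeSet ∧ (σ e).1 = u).card := by
    intro u
    set C := Finset.univ.filter fun e : Sym2 V => e ∈ G.edgeSet ∧ (σ e).1 = u with hCdef
    set L := Finset.univ.filter fun e : Sym2 V => (e ∈ G.edgeSet ∧ u ∈ e) ∧ (σ e).1 ≠ u with hLdef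
    have hLC : C.card + L.card = k + k := by
      rw [← aux_inc G _ hreg u, ← Finset.card_union_of_disjoint]
      · congr 1
        ext e
        simp only [hCdef, hLdef, Finset.mem_union, Finset.mem_filter, Finset.mem_univ, true_and]
        constructor
        · rintro (⟨h, rfl⟩ | h)
          · exact ⟨h, hc e h⟩
          · exact h.1
        · intro h
          by_cases h2 : (σ e).1 = u
          · exact Or.inl ⟨h.1, h2⟩
          · exact Or.inr ⟨h, h2⟩
      · rw [Finset.disjoint_left]
        intro e he he'
        exact (Finset.mem_filter.1 he').2.2 (Finset.mem_filter.1 he).2.2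
    have hinj : Set.InjOn σ L := by
      intro a ha b hb hab
      obtain ⟨⟨ha1, ha2⟩, ha3⟩ := (Finset.mem_filter.1 (Finset.mem_coe.1 ha)).2
      obtain ⟨⟨hb1, hb2⟩, hb3⟩ := (Finset.mem_filter.1 (Finset.mem_coe.1 hb)).2
      rw [aux_other (hc a ha1) ha2 ha3, aux_other (hc b hb1) hb2 hb3, hab]
    have hLsub : L.image σ ⊆ D.stars.filter fun p => ∃ e ∈ p.2, u ∈ e := by
      intro p hp
      obtain ⟨e, he, rfl⟩ := Finset.mem_image.1 hp
      obtain ⟨⟨h1, h2⟩, h3⟩ := (Finset.mem_filter.1 he).2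
      exact Finset.mem_filter.2 ⟨(hσ e h1).1, e, (hσ e h1).2, h2⟩
    have hLcard := Finset.card_image_of_injOn hinj
    have hst := hD u
    unfold StarDecomposition.storage at hst
    have h1 := Finset.card_le_card hLsub
    have hCpos : 0 < C.card := by omega
    obtain ⟨e, he⟩ := Finset.card_pos.1 hCpos
    obtain ⟨he1, he2⟩ := (Finset.mem_filter.1 he).2
    have hnot : σ e ∉ L.image σ := by
      intro h
      obtain ⟨e', he', h'⟩ := Finset.mem_image.1 h
      exact (Finset.mem_filter.1 he').2.2 (by rw [h', he2])
    have hins : insert (σ e) (L.image σ) ⊆ D.stars.filter fun p => ∃ e ∈ p.2, u ∈ e := by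
      refine Finset.insert_subset ?_ hLsub
      exact Finset.mem_filter.2 ⟨(hσ e he1).1, e, (hσ e he1).2, he2 ▸ hc e he1⟩
    have h2 := Finset.card_le_card hins
    rw [Finset.card_insert_of_notMem hnot] at h2
    omega
  have hE : (Finset.univ.filter fun e : Sym2 V => e ∈ G.edgeSet).card =
      ∑ u, (Finset.univ.filter fun e : Sym2 V => e ∈ G.edgeSet ∧ (σ e).1 = u).card := by
    rw [Finset.card_eq_sum_card_fiberwise (f := fun e => (σ e).1) (t := Finset.univ)
      (fun _ _ => Finset.mem_coe.2 (Finset.mem_univ _))]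
    simp only [Finset.filter_filter]
  have h2 := G.sum_degrees_eq_twice_card_edges
  have h3 : G.edgeFinset.card = (Finset.univ.filter fun e : Sym2 V => e ∈ G.edgeSet).card := by
    congr 1
    ext e
    simp
  have h4 : ∑ u : V, (k + 1) ≤ ∑ u, (Finset.univ.filter
      fun e : Sym2 V => e ∈ G.edgeSet ∧ (σ e).1 = u).card :=
    Finset.sum_le_sum fun u _ => hC u
  have h5 : ∑ v, G.degree v = ∑ v : V, (k + k) := Finset.sum_congr rfl fun v _ => hreg v
  simp only [Finset.sum_const, Finset.card_univ, smul_eq_mul] at h4 h5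
  have : 0 < Fintype.card V := Fintype.card_pos
  nlinarith

/-- If `G` is regular of even degree `d > 0`, then
`S_max*(G) = (d+2)/2`. -/
theorem SmaxStar_regular_even {V : Type*} [Fintype V] [Nonempty V] (G : SimpleGraph V)
    [DecidableRel G.Adj] (d : ℕ) (hd : Even d) (hpos : 0 < d)
    (hreg : G.IsRegularOfDegree d) :
    SmaxStar G = (d + 2) / 2 := by
  obtain ⟨k, rfl⟩ := hd
  have hk : (k + k + 2) / 2 = k + 1 := by omega
  rw [hk]
  have hmem : k + 1 ∈ {k | ∃ D : StarDecomposition G, ∀ v, D.storage v ≤ k} :=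
    aux_upper G k (by omega) hreg
  apply le_antisymm
  · exact Nat.sInf_le hmem
  · obtain ⟨D, hD⟩ := Nat.sInf_mem ⟨_, hmem⟩
    by_contra hlt
    refine aux_lower G k (by omega) hreg D fun v => (hD v).trans ?_
    unfold SmaxStar at hlt
    omega
end

section
/- For every finite simple graph G on at least one vertex, MMO(G) ≤ S_max*(G) ≤ MMO(G) + 1, where MMO(G) is the minimum over all orientations of G of the maximum outdegree of a vertex, and S_max*(G) is the minimum over all edge-decompositions of G into stars of the maximum storage of a vertex. -/
open Classical

theorem outdeg_le_of_star {V : Type*} [Fintype V] [Nonempty V] (G : SimpleGraph V)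
    (D : StarDecomposition G) : ∃ o : EdgeOrientation G, ∀ v, o.outdeg v ≤ D.storage v := by
  have h : ∀ e : Sym2 V, ∃ p : V × Finset (Sym2 V), e ∈ G.edgeSet → p ∈ D.stars ∧ e ∈ p.2 := by
    intro e
    by_cases he : e ∈ G.edgeSet
    · obtain ⟨p, hp, hq⟩ := D.covers e he
      exact ⟨p, fun _ => ⟨hp, hq⟩⟩
    · exact ⟨(Classical.arbitrary V, ∅), fun h => absurd h he⟩
  choose f hf using h
  refine ⟨⟨fun e => (f e).1, fun e he => D.centre_mem _ (hf e he).1 e (hf e he).2⟩, ?_⟩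
  intro v
  unfold EdgeOrientation.outdeg StarDecomposition.storage
  rw [← Set.ncard_coe_finset]
  apply Set.ncard_le_ncard_of_injOn f
  · rintro e ⟨he, hv, -⟩
    simp only [Finset.coe_filter, Set.mem_ofPred_eq]
    exact ⟨(hf e he).1, e, (hf e he).2, hv⟩
  · rintro e ⟨he, hv, hn⟩ e' ⟨he', hv', -⟩ hee
    have h1 := D.centre_mem _ (hf e he).1 e (hf e he).2
    have h2 := D.centre_mem _ (hf e' he').1 e' (hf e' he').2
    rw [← hee] at h2
    rw [(Sym2.mem_and_mem_iff hn).1 ⟨h1, hv⟩, (Sym2.mem_and_mem_iff hn).1 ⟨h2, hv'⟩]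

theorem star_of_orientation {V : Type*} [Fintype V] (G : SimpleGraph V)
    (o : EdgeOrientation G) : ∃ D : StarDecomposition G, ∀ v, D.storage v ≤ o.outdeg v + 1 := by
  let st : V → V × Finset (Sym2 V) :=
    fun v => (v, Finset.univ.filter fun e => e ∈ G.edgeSet ∧ o.head e = v)
  have hst : ∀ v e, e ∈ (st v).2 ↔ e ∈ G.edgeSet ∧ o.head e = v := by
    intro v e
    simp [st]
  let S : Finset (V × Finset (Sym2 V)) := (Finset.univ.image st).filter fun p => p.2.Nonempty
  have hS : ∀ p, p ∈ S ↔ (∃ v, st v = p) ∧ p.2.Nonempty := by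
    intro p
    simp [S]
  refine ⟨⟨S, fun p hp => ((hS p).1 hp).2, ?_, ?_, ?_, ?_⟩, ?_⟩
  · intro p hp e he
    obtain ⟨⟨v, rfl⟩, -⟩ := (hS p).1 hp
    obtain ⟨h1, h2⟩ := (hst v e).1 he
    have := o.head_mem e h1
    rw [h2] at this
    exact this
  · intro p hp e he
    obtain ⟨⟨v, rfl⟩, -⟩ := (hS p).1 hp
    exact ((hst v e).1 he).1
  · intro p hp q hq hpq
    obtain ⟨⟨v, rfl⟩, -⟩ := (hS p).1 hp
    obtain ⟨⟨w, rfl⟩, -⟩ := (hS q).1 hq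
    rw [Finset.disjoint_left]
    intro e he he'
    apply hpq
    rw [← ((hst v e).1 he).2, ← ((hst w e).1 he').2]
  · intro e he
    have := (hst (o.head e) e).2 ⟨he, rfl⟩
    exact ⟨st (o.head e), (hS _).2 ⟨⟨_, rfl⟩, e, this⟩, this⟩
  · intro v
    unfold EdgeOrientation.outdeg StarDecomposition.storage
    rw [Set.ncard_eq_toFinset_card']
    set T := Set.toFinset {e | e ∈ G.edgeSet ∧ v ∈ e ∧ o.head e ≠ v} with hT
    refine (Finset.card_le_card (t := insert (st v) (T.image fun e => st (o.head e))) ?_).trans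
      ((Finset.card_insert_le _ _).trans (Nat.succ_le_succ Finset.card_image_le))
    intro p hp
    obtain ⟨hp, e, he, hv⟩ := Finset.mem_filter.1 hp
    obtain ⟨⟨w, rfl⟩, -⟩ := (hS p).1 hp
    obtain ⟨h1, h2⟩ := (hst w e).1 he
    by_cases hw : w = v
    · rw [hw]
      exact Finset.mem_insert_self _ _
    · refine Finset.mem_insert_of_mem (Finset.mem_image.2 ⟨e, ?_, by rw [h2]⟩)
      rw [hT, Set.mem_toFinset]
      exact ⟨h1, hv, by rw [h2]; exact hw⟩

/-- For every finite simple graph `G` on at least one vertex,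
`MMO(G) ≤ S_max*(G) ≤ MMO(G) + 1`. -/
theorem MMO_le_SmaxStar_le {V : Type*} [Fintype V] [Nonempty V] (G : SimpleGraph V) :
    MMO G ≤ SmaxStar G ∧ SmaxStar G ≤ MMO G + 1 := by
  have hne : {k | ∃ o : EdgeOrientation G, ∀ v, o.outdeg v ≤ k}.Nonempty := by
    let o : EdgeOrientation G := ⟨fun e => e.out.1, fun e _ => Sym2.out_fst_mem e⟩
    exact ⟨∑ v, o.outdeg v, o, fun v =>
      Finset.single_le_sum (f := fun v => o.outdeg v) (fun _ _ => Nat.zero_le _)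
        (Finset.mem_univ v)⟩
  have hup : MMO G + 1 ∈ {k | ∃ D : StarDecomposition G, ∀ v, D.storage v ≤ k} := by
    obtain ⟨o, ho⟩ := Nat.sInf_mem hne
    obtain ⟨D, hD⟩ := star_of_orientation G o
    exact ⟨D, fun v => (hD v).trans (Nat.succ_le_succ (ho v))⟩
  refine ⟨?_, Nat.sInf_le hup⟩
  obtain ⟨D, hD⟩ := Nat.sInf_mem ⟨_, hup⟩
  obtain ⟨o, ho⟩ := outdeg_le_of_star G D
  exact Nat.sInf_le ⟨o, fun v => (ho v).trans (hD v)⟩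
end

section
/- Let t > 10 be an integer and let G be the join of the complete graph K_5 and the empty graph on t vertices (i.e., G has vertex set the disjoint union of a 5-set A and a t-set B, with two vertices adjacent if and only if at least one of them lies in A). Then MMO(G) = 5 and S_max*(G) = 5, where MMO(G) is the minimum over all orientations of G of the maximum outdegree of a vertex and S_max*(G) is the minimum over all edge-decompositions of G into stars of the maximum storage of a vertex. -/
open Classical

theorem aux_storage {V : Type*} {G : SimpleGraph V} (D : StarDecomposition G) (v : V) :
    D.storage v ≤ D.stars.card := Finset.card_filter_le _ _

theorem aux_orient_s15 {V : Type*} {G : SimpleGraph V} (D : StarDecomposition G) :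
    ∃ o : EdgeOrientation G, ∀ v, o.outdeg v ≤ D.storage v := by
  have h : ∀ e : Sym2 V, ∃ p : V × Finset (Sym2 V), e ∈ G.edgeSet → p ∈ D.stars ∧ e ∈ p.2 := by
    intro e
    by_cases he : e ∈ G.edgeSet
    · obtain ⟨p, hp, hep⟩ := D.covers e he
      exact ⟨p, fun _ => ⟨hp, hep⟩⟩
    · exact ⟨(e.out.1, ∅), fun h => absurd h he⟩
  choose f hf using h
  refine ⟨⟨fun e => (f e).1, fun e he => D.centre_mem _ (hf e he).1 e (hf e he).2⟩, ?_⟩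
  intro v
  unfold EdgeOrientation.outdeg StarDecomposition.storage
  rw [← Set.ncard_coe_finset]
  refine Set.ncard_le_ncard_of_injOn f ?_ ?_ (Finset.finite_toSet _)
  · rintro e ⟨he, hv, -⟩
    simp only [Finset.coe_filter, Set.mem_ofPred_eq]
    exact ⟨(hf e he).1, e, (hf e he).2, hv⟩
  · rintro e ⟨he, hv, hne⟩ e' ⟨he', hv', hne'⟩ heq
    have h1 := D.centre_mem _ (hf e he).1 e (hf e he).2
    have h2 := D.centre_mem _ (hf e' he').1 e' (hf e' he').2
    rw [← heq] at h2
    rw [(Sym2.mem_and_mem_iff hne).1 ⟨h1, hv⟩, (Sym2.mem_and_mem_iff hne).1 ⟨h2, hv'⟩]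

theorem aux_decomp (t : ℕ) (ht : 10 < t) :
    ∃ D : StarDecomposition (SimpleGraph.fromRel fun (u _ : Fin 5 ⊕ Fin t) => u.isLeft = true),
      ∀ v, D.storage v ≤ 5 := by
  set G := SimpleGraph.fromRel fun (u _ : Fin 5 ⊕ Fin t) => u.isLeft = true with hG
  let S : Fin 5 → Finset (Sym2 (Fin 5 ⊕ Fin t)) := fun i =>
    Finset.univ.filter fun e => e ∈ G.edgeSet ∧ Sum.inl i ∈ e ∧ ∀ k < i, Sum.inl k ∉ e
  have hS : ∀ i e, e ∈ S i ↔ e ∈ G.edgeSet ∧ Sum.inl i ∈ e ∧ ∀ k < i, Sum.inl k ∉ e := by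
    intro i e; simp [S]
  let st : Finset ((Fin 5 ⊕ Fin t) × Finset (Sym2 (Fin 5 ⊕ Fin t))) :=
    Finset.univ.image fun i : Fin 5 => (Sum.inl i, S i)
  have hst : ∀ p, p ∈ st ↔ ∃ i, (Sum.inl i, S i) = p := by intro p; simp [st]
  refine ⟨⟨st, ?_, ?_, ?_, ?_, ?_⟩, ?_⟩
  · intro p hp
    obtain ⟨i, rfl⟩ := (hst p).1 hp
    refine ⟨s(Sum.inl i, Sum.inr ⟨0, by omega⟩), (hS _ _).2 ⟨?_, ?_, ?_⟩⟩
    · simp [hG]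
    · simp
    · intro k hk; simp [hk.ne]
  · intro p hp e he
    obtain ⟨i, rfl⟩ := (hst p).1 hp
    exact ((hS _ _).1 he).2.1
  · intro p hp e he
    obtain ⟨i, rfl⟩ := (hst p).1 hp
    exact ((hS _ _).1 he).1
  · intro p hp q hq hpq
    obtain ⟨i, rfl⟩ := (hst p).1 hp
    obtain ⟨j, rfl⟩ := (hst q).1 hq
    rw [Finset.disjoint_left]
    intro e h1 h2
    have h1 := (hS _ _).1 h1
    have h2 := (hS _ _).1 h2
    rcases lt_trichotomy i j with h | h | h
    · exact h2.2.2 i h h1.2.1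
    · subst h; exact hpq rfl
    · exact h1.2.2 j h h2.2.1
  · intro e he
    have hex : (Finset.univ.filter fun i : Fin 5 => (Sum.inl i : Fin 5 ⊕ Fin t) ∈ e).Nonempty := by
      induction e with
      | _ a b =>
        have : G.Adj a b := he
        rw [hG, SimpleGraph.fromRel_adj] at this
        rcases this with ⟨-, h | h⟩ <;> obtain ⟨i, rfl⟩ := Sum.isLeft_iff.1 h <;>
          exact ⟨i, by simp⟩
    obtain ⟨i, hi, hmin⟩ := Finset.exists_min_image _ id hex
    refine ⟨_, (hst _).2 ⟨i, rfl⟩, (hS _ _).2 ⟨he, (Finset.mem_filter.1 hi).2, ?_⟩⟩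
    intro k hk hke
    exact absurd (hmin k (by simp [hke])) (not_le.2 hk)
  · intro v
    refine (aux_storage _ _).trans ?_
    exact Finset.card_image_le.trans (by simp)

theorem aux_lower_s15 (t : ℕ) (ht : 10 < t)
    (G : SimpleGraph (Fin 5 ⊕ Fin t))
    (hG : G = SimpleGraph.fromRel fun (u _ : Fin 5 ⊕ Fin t) => u.isLeft = true)
    (o : EdgeOrientation G)
    (k : ℕ) (hk : ∀ v, o.outdeg v ≤ k) : 5 ≤ k := by
  by_contra hlt
  have hdeg := G.sum_degrees_eq_twice_card_edges
  rw [Fintype.sum_sum_type] at hdeg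
  have hl : ∀ i : Fin 5, G.degree (Sum.inl i) = 4 + t := by
    intro i
    have : G.neighborFinset (Sum.inl i) = Finset.univ.erase (Sum.inl i) := by
      ext x; simp [hG, ne_comm]
    rw [← SimpleGraph.card_neighborFinset_eq_degree, this, Finset.card_erase_of_mem (by simp)]
    simp only [Finset.card_univ, Fintype.card_sum, Fintype.card_fin]; omega
  have hr : ∀ j : Fin t, G.degree (Sum.inr j) = 5 := by
    intro j
    have : G.neighborFinset (Sum.inr j) = Finset.univ.image Sum.inl := by
      ext x; cases x <;> simp [hG]
    rw [← SimpleGraph.card_neighborFinset_eq_degree, this,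
      Finset.card_image_of_injective _ Sum.inl_injective]
    simp
  simp only [hl, hr, Finset.sum_const, Finset.card_univ, Fintype.card_fin, smul_eq_mul] at hdeg
  have hsub : G.edgeFinset ⊆ Finset.univ.biUnion fun v =>
      Finset.univ.filter fun e => e ∈ G.edgeSet ∧ v ∈ e ∧ o.head e ≠ v := by
    intro e he
    rw [SimpleGraph.mem_edgeFinset] at he
    have hnd := G.not_isDiag_of_mem_edgeSet he
    simp only [Finset.mem_biUnion, Finset.mem_filter, Finset.mem_univ, true_and]
    induction e with
    | _ a b =>
      have hab : a ≠ b := by simpa using hnd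
      by_cases h : o.head s(a, b) = a
      · exact ⟨b, he, by simp, by rw [h]; exact hab⟩
      · exact ⟨a, he, by simp, h⟩
  have hc := (Finset.card_le_card hsub).trans Finset.card_biUnion_le
  have hle : ∀ v, (Finset.univ.filter fun e => e ∈ G.edgeSet ∧ v ∈ e ∧ o.head e ≠ v).card ≤ 4 := by
    intro v
    have := hk v
    unfold EdgeOrientation.outdeg at this
    rw [← Set.ncard_coe_finset]
    simp only [Finset.coe_filter, Finset.mem_univ, true_and]
    omega
  have h4 := hc.trans (Finset.sum_le_sum fun v _ => hle v)
  simp only [Finset.sum_const, Finset.card_univ, Fintype.card_sum, Fintype.card_fin,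
    smul_eq_mul] at h4
  omega

/-- For any `t > 10`, the join of `K_5` and the empty graph on `t`
vertices (vertices `u`, `v` adjacent iff `u ≠ v` and at least one of them is in the
`5`-set) satisfies `MMO(G) = 5` and `S_max*(G) = 5`. -/
theorem MMO_and_SmaxStar_join (t : ℕ) (ht : 10 < t) :
    MMO (SimpleGraph.fromRel fun (u _ : Fin 5 ⊕ Fin t) => u.isLeft = true) = 5 ∧
      SmaxStar (SimpleGraph.fromRel fun (u _ : Fin 5 ⊕ Fin t) => u.isLeft = true) = 5 := by
  obtain ⟨D, hD⟩ := aux_decomp t ht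
  constructor
  · obtain ⟨o, ho⟩ := aux_orient_s15 D
    have hm : ∃ o : EdgeOrientation _, ∀ v, o.outdeg v ≤ 5 := ⟨o, fun v => (ho v).trans (hD v)⟩
    refine le_antisymm (Nat.sInf_le hm) (le_csInf ⟨5, hm⟩ ?_)
    rintro k ⟨o', ho'⟩
    exact aux_lower_s15 t ht _ rfl o' k ho'
  · refine le_antisymm (Nat.sInf_le ⟨D, hD⟩) (le_csInf ⟨5, D, hD⟩ ?_)
    rintro k ⟨D', hD'⟩
    obtain ⟨o', ho'⟩ := aux_orient_s15 D'
    exact aux_lower_s15 t ht _ rfl o' k fun v => (ho' v).trans (hD' v)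
end
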